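/- Let w be a nonnegative integer. Every finite simple graph with treewidth at most w is conflict-free (2w+1)-choosable. -/

import Mathlib

open SimpleGraph

universe u v

namespace CFPaper

variable {V : Type u} {W : Type v}

/-- A coloring is proper if adjacent vertices get distinct colors. -/
def Proper (G : SimpleGraph V) (φ : V → ℕ) : Prop :=
  ∀ ⦃u w : V⦄, G.Adj u w → φ u ≠ φ w

/-- A coloring is conflict-free if every non-isolated vertex has a color appearing
exactly once in its open neighborhood. -/
def ConflictFree (G : SimpleGraph V) (φ : V → ℕ) : Prop :=
  ∀ v : V, (G.neighborSet v).Nonempty →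
    ∃ c : ℕ, {u : V | G.Adj v u ∧ φ u = c}.ncard = 1

/-- `G` is conflict-free `k`-choosable (k a real number). -/
def CFChoosable (G : SimpleGraph V) (k : ℝ) : Prop :=
  ∀ L : V → Finset ℕ, (∀ v, k ≤ ((L v).card : ℝ)) →
    ∃ φ : V → ℕ, (∀ v, φ v ∈ L v) ∧ Proper G φ ∧ ConflictFree G φ

/-- A coloring is `S`-achieved if for every non-isolated vertex there are `s ∈ S`
and a color appearing exactly `s` times in its open neighborhood. -/
def SAchieved (S : Set ℕ) (G : SimpleGraph V) (φ : V → ℕ) : Prop :=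
  ∀ v : V, (G.neighborSet v).Nonempty →
    ∃ s ∈ S, ∃ c : ℕ, {u : V | G.Adj v u ∧ φ u = c}.ncard = s

/-- `G` is `S`-achieved `t`-choosable. -/
def SChoosable (S : Set ℕ) (G : SimpleGraph V) (t : ℕ) : Prop :=
  ∀ L : V → Finset ℕ, (∀ v, t ≤ (L v).card) →
    ∃ φ : V → ℕ, (∀ v, φ v ∈ L v) ∧ Proper G φ ∧ SAchieved S G φ

/-- `G` is properly `S`-achieved `t`-colorable (colors from `{1,…,t}`). -/
def SColorable (S : Set ℕ) (G : SimpleGraph V) (t : ℕ) : Prop :=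
  ∃ φ : V → ℕ, (∀ v, φ v ∈ Finset.Icc 1 t) ∧ Proper G φ ∧ SAchieved S G φ

/-- `G` has a proper conflict-free coloring with colors from `{1,…,t}`. -/
def PCFColorable (G : SimpleGraph V) (t : ℕ) : Prop :=
  ∃ φ : V → ℕ, (∀ v, φ v ∈ Finset.Icc 1 t) ∧ Proper G φ ∧ ConflictFree G φ

/-- The proper conflict-free chromatic number. -/
noncomputable def chiPCF (G : SimpleGraph V) : ℕ := sInf {t : ℕ | PCFColorable G t}

/-- `(B x : x : ι)` is a tree-decomposition of `G` with underlying tree `T`. -/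
structure IsTreeDecomp (G : SimpleGraph V) {ι : Type*} (T : SimpleGraph ι) (B : ι → Set V) :
    Prop where
  tree : T.IsTree
  bags_connected : ∀ vv : V, (T.induce {x : ι | vv ∈ B x}).Connected
  edge_in_bag : ∀ ⦃a b : V⦄, G.Adj a b → ∃ x : ι, a ∈ B x ∧ b ∈ B x

/-- The torso of a tree-decomposition at a node `x`. -/
def torso (G : SimpleGraph V) {ι : Type*} (T : SimpleGraph ι) (B : ι → Set V) (x : ι) :
    SimpleGraph (B x) :=
  SimpleGraph.fromRel fun a b =>
    G.Adj a b ∨ ∃ y : ι, T.Adj x y ∧ (a : V) ∈ B y ∧ (b : V) ∈ B y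

/-- The frame of a tree-decomposition at a node `x`. -/
def frame (G : SimpleGraph V) {ι : Type*} (T : SimpleGraph ι) (B : ι → Set V) (x : ι) :
    Set (Set (B x)) :=
  {s : Set (B x) | ∃ y : ι, T.Adj x y ∧ s = {a : B x | (a : V) ∈ B y}}

/-- A subgraph `H` of `G` is `C`-compatible: every edge of `H` has both ends in some member
of `C`. -/
def Compatible (C : Set (Set V)) (H : SimpleGraph V) : Prop :=
  ∀ ⦃a b : V⦄, H.Adj a b → ∃ c ∈ C, a ∈ c ∧ b ∈ c

/-- `G` is `(S,C,L,t)`-extendable. -/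
def Extendable (S : Set ℕ) (G : SimpleGraph V) (C : Set (Set V)) (L : V → Finset ℕ)
    (t : ℕ) : Prop :=
  ∀ (Wc : Set V), G.IsClique Wc → Wc.ncard ≤ t →
  ∀ (H : SimpleGraph V), H ≤ G → Compatible C H →
  ∀ (φW : V → ℕ), (∀ w ∈ Wc, φW w ∈ L w) →
    (∀ a ∈ Wc, ∀ b ∈ Wc, G.Adj a b → φW a ≠ φW b) →
  ∀ (f : V → ℕ) (g : V → Bool),
  ∃ φ : V → ℕ, (∀ w, φ w ∈ L w) ∧ Proper G φ ∧ (∀ w ∈ Wc, φ w = φW w) ∧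
    (∀ w ∈ Wc, g w = false → ∀ u : V, G.Adj w u → u ∉ Wc → φ u ≠ f w) ∧
    (∀ w : V, (w ∉ Wc ∨ (w ∈ Wc ∧ g w = true)) →
      (((G \ H).neighborSet w = ∅) ∨
        ∃ c : ℕ, {u : V | (G \ H).Adj w u ∧ φ u = c}.ncard ∈ S))

/-- `H` is a minor of `G` (branch-set definition). -/
def IsMinor (H : SimpleGraph W) (G : SimpleGraph V) : Prop :=
  ∃ ρ : W → Set V,
    (∀ w : W, (G.induce (ρ w)).Connected) ∧
    (Pairwise fun a b => Disjoint (ρ a) (ρ b)) ∧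
    ∀ ⦃a b : W⦄, H.Adj a b → ∃ x ∈ ρ a, ∃ y ∈ ρ b, G.Adj x y

/-- The spanning subgraph of `G` whose edges are those between `A` and its complement. -/
def crossGraph (G : SimpleGraph V) (A : Set V) : SimpleGraph V :=
  SimpleGraph.fromRel fun x y => G.Adj x y ∧ x ∈ A ∧ y ∉ A

/-- The odd contraction of `G` determined by the bipartition `{A, Aᶜ}`: contract each
connected component of the spanning bipartite subgraph between `A` and `Aᶜ`. -/
def oddContract (G : SimpleGraph V) (A : Set V) :
    SimpleGraph ((crossGraph G A).ConnectedComponent) :=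
  SimpleGraph.fromRel fun Ct Dt =>
    ∃ x y : V, (crossGraph G A).connectedComponentMk x = Ct ∧
      (crossGraph G A).connectedComponentMk y = Dt ∧ G.Adj x y

/-- `OddContractions G H`: `H` is obtained from `G` by repeatedly applying odd
contractions. -/
inductive OddContractions : ∀ {α : Type u}, SimpleGraph α → ∀ {β : Type u}, SimpleGraph β → Prop
  | refl {α : Type u} (G : SimpleGraph α) : OddContractions G G
  | step {α : Type u} (G : SimpleGraph α) (A : Set α) {β : Type u} {H : SimpleGraph β} :
      OddContractions (oddContract G A) H → OddContractions G H

/-- `H` is an odd minor of `G`: `H` is isomorphic to a graph obtained from a subgraph of `G`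
by repeatedly applying odd contractions. -/
def IsOddMinor (H : SimpleGraph W) (G : SimpleGraph V) : Prop :=
  ∃ (s : Set V) (G₀ : SimpleGraph s), G₀ ≤ G.induce s ∧
    ∃ (β : Type u) (K : SimpleGraph β), OddContractions G₀ K ∧ Nonempty (H ≃g K)

/-- The graph obtained from `H` by subdividing each edge `e` exactly `n e` times, where
`σ` chooses an orientation of each edge. -/
def subdivGraph (H : SimpleGraph W) (σ : H.edgeSet → W × W) (n : H.edgeSet → ℕ) :
    SimpleGraph (W ⊕ (Σ e : H.edgeSet, Fin (n e))) :=
  SimpleGraph.fromRel fun a b =>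
    (∃ (x y : W) (h : H.Adj x y),
        a = Sum.inl x ∧ b = Sum.inl y ∧ n ⟨s(x, y), H.mem_edgeSet.mpr h⟩ = 0) ∨
    (∃ (x : W) (p : Σ e : H.edgeSet, Fin (n e)), a = Sum.inl x ∧ b = Sum.inr p ∧
        ((x = (σ p.1).1 ∧ (p.2 : ℕ) = 0) ∨ (x = (σ p.1).2 ∧ (p.2 : ℕ) = n p.1 - 1))) ∨
    (∃ p q : Σ e : H.edgeSet, Fin (n e), a = Sum.inr p ∧ b = Sum.inr q ∧ p.1 = q.1 ∧
        (p.2 : ℕ) + 1 = (q.2 : ℕ))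

/-- `σ` is a valid orientation of the edges of `H`. -/
def ValidOrientation (H : SimpleGraph W) (σ : H.edgeSet → W × W) : Prop :=
  ∀ e : H.edgeSet, s((σ e).1, (σ e).2) = (e : Sym2 W)

/-- `G` contains a subdivision of `H` as a subgraph. -/
def ContainsSubdivision (H : SimpleGraph W) (G : SimpleGraph V) : Prop :=
  ∃ (σ : H.edgeSet → W × W) (n : H.edgeSet → ℕ), ValidOrientation H σ ∧
    ∃ f : subdivGraph H σ n →g G, Function.Injective f

/-- The strong product of two graphs. -/
def strongProd {α : Type*} {β : Type*} (A : SimpleGraph α) (B : SimpleGraph β) :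
    SimpleGraph (α × β) :=
  SimpleGraph.fromRel fun p q =>
    (A.Adj p.1 q.1 ∧ p.2 = q.2) ∨ (p.1 = q.1 ∧ B.Adj p.2 q.2) ∨
      (A.Adj p.1 q.1 ∧ B.Adj p.2 q.2)


/-- A layering of `G`. -/
def IsLayering (G : SimpleGraph V) (Vl : ℕ → Set V) : Prop :=
  (∀ vv : V, ∃ i : ℕ, vv ∈ Vl i) ∧ (Pairwise fun i j => Disjoint (Vl i) (Vl j)) ∧
  ∀ ⦃a b : V⦄, G.Adj a b → ∃ i : ℕ, a ∈ Vl i ∪ Vl (i + 1) ∧ b ∈ Vl i ∪ Vl (i + 1)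

lemma tree_top {ι : Type} {T : SimpleGraph ι} (hT : T.IsTree) (r x t : ι) (S : Set ι)
    (hS : (T.induce S).Connected) (hx : x ∈ S) (ht : t ∈ S)
    (hmin : ∀ y ∈ S, T.dist t r ≤ T.dist y r) :
    ∀ p : T.Walk x r, p.IsPath → t ∈ p.support ∧
      ∀ y ∈ p.support, T.dist t r ≤ T.dist y r → y ∈ S := by
  classical
  intro p hp
  obtain ⟨q0⟩ := hS.preconnected ⟨x, hx⟩ ⟨t, ht⟩
  let q1 : T.Walk x t := q0.map (SimpleGraph.Embedding.induce S).toHom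
  have hq1 : ∀ y ∈ q1.support, y ∈ S := by
    intro y hy
    have hy' : y ∈ (q0.map (SimpleGraph.Embedding.induce S).toHom).support := hy
    rw [SimpleGraph.Walk.support_map] at hy'
    obtain ⟨z, _, rfl⟩ := List.mem_map.1 hy'
    exact z.2
  let q : T.Walk x t := q1.bypass
  have hqp : q.IsPath := q1.bypass_isPath
  have hq : ∀ y ∈ q.support, y ∈ S := fun y hy => hq1 y (q1.support_bypass_subset hy)
  obtain ⟨s, hsp, hsl⟩ := hT.1.exists_path_of_dist t r
  have hs : ∀ y ∈ s.support, T.dist t r ≤ T.dist y r → y = t := by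
    intro y hy hd
    have h1 := congrArg SimpleGraph.Walk.length (s.take_spec hy)
    rw [SimpleGraph.Walk.length_append] at h1
    have h2 := SimpleGraph.dist_le (s.dropUntil y hy)
    have h3 : (s.takeUntil y hy).length = 0 := by omega
    exact (SimpleGraph.Walk.eq_of_length_eq_zero h3).symm
  have hpath : (q.append s).IsPath := by
    rw [SimpleGraph.Walk.isPath_def, SimpleGraph.Walk.support_append]
    have hsn := hsp.support_nodup
    rw [SimpleGraph.Walk.support_eq_cons] at hsn
    rw [List.nodup_append]
    refine ⟨hqp.support_nodup, (List.nodup_cons.1 hsn).2, ?_⟩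
    rintro a ha b hb rfl
    have : a = t := hs a (List.mem_of_mem_tail hb) (hmin a (hq a ha))
    subst this
    exact (List.nodup_cons.1 hsn).1 hb
  have hpe : p = q.append s := by
    have := hT.2.path_unique ⟨p, hp⟩ ⟨_, hpath⟩
    exact congrArg Subtype.val this
  subst hpe
  refine ⟨?_, ?_⟩
  · rw [SimpleGraph.Walk.mem_support_append_iff]
    exact Or.inl q.end_mem_support
  · intro y hy hd
    rw [SimpleGraph.Walk.mem_support_append_iff] at hy
    rcases hy with hy | hy
    · exact hq y hy
    · rw [hs y hy hd]; exact ht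

lemma greedy (w : ℕ) {V : Type} [Fintype V] (G : SimpleGraph V) (rank : V → ℕ)
    (hinj : Function.Injective rank) (P : V → Finset V) (hPc : ∀ v, (P v).card ≤ w)
    (hPr : ∀ v, ∀ u ∈ P v, rank u < rank v)
    (hG : ∀ u v, G.Adj u v → rank u < rank v → u ∈ P v)
    (hP : ∀ v, ∀ a ∈ P v, ∀ b ∈ P v, rank a < rank b → a ∈ P b)
    (L : V → Finset ℕ) (hL : ∀ v, 2 * w + 1 ≤ (L v).card) (m : ℕ) :
    ∃ φ : V → ℕ, (∀ v, rank v < m → φ v ∈ L v) ∧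
      (∀ v, rank v < m → ∀ u ∈ P v, φ u ≠ φ v) ∧
      (∀ v, rank v < m → (∃ u, rank u < m ∧ G.Adj v u) →
        ∃ c z, rank z < m ∧ G.Adj v z ∧ φ z = c ∧
          ∀ u, rank u < m → G.Adj v u → φ u = c → u = z) := by
  classical
  induction m with
  | zero => exact ⟨fun _ => 0, by simp, by simp, by simp⟩
  | succ m ih =>
    obtain ⟨φ, h1, h2, h3⟩ := ih
    by_cases hx : ∃ x, rank x = m
    swap
    · have key : ∀ v, rank v < m + 1 ↔ rank v < m := by
        intro v
        have : rank v ≠ m := fun h => hx ⟨v, h⟩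
        omega
      simp only [key]
      exact ⟨φ, h1, h2, h3⟩
    obtain ⟨x, hx⟩ := hx
    have h3' : ∀ v, ∃ c, rank v < m → (∃ u, rank u < m ∧ G.Adj v u) →
        ∃ z, rank z < m ∧ G.Adj v z ∧ φ z = c ∧
          ∀ u, rank u < m → G.Adj v u → φ u = c → u = z := by
      intro v
      by_cases h : rank v < m ∧ (∃ u, rank u < m ∧ G.Adj v u)
      · obtain ⟨c, hc⟩ := h3 v h.1 h.2
        exact ⟨c, fun _ _ => hc⟩
      · exact ⟨0, fun a b => absurd ⟨a, b⟩ h⟩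
    choose c hc using h3'
    have hcard : ((P x).image φ ∪ (P x).image c).card < (L x).card := by
      have a1 := Finset.card_union_le ((P x).image φ) ((P x).image c)
      have a2 := Finset.card_image_le (s := P x) (f := φ)
      have a3 := Finset.card_image_le (s := P x) (f := c)
      have := hPc x
      have := hL x
      omega
    obtain ⟨a, haL, ha⟩ := Finset.exists_mem_notMem_of_card_lt_card hcard
    have ha1 : ∀ u ∈ P x, φ u ≠ a := by
      intro u hu h
      exact ha (Finset.mem_union_left _ (h ▸ Finset.mem_image_of_mem φ hu))
    have ha2 : ∀ u ∈ P x, c u ≠ a := by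
      intro u hu h
      exact ha (Finset.mem_union_right _ (h ▸ Finset.mem_image_of_mem c hu))
    have hsplit : ∀ v, rank v < m + 1 → v = x ∨ rank v < m := by
      intro v hv
      by_cases h : rank v = m
      · exact Or.inl (hinj (h.trans hx.symm))
      · right; omega
    have hne : ∀ v, rank v < m → v ≠ x := by
      rintro v hv rfl; omega
    let ψ := Function.update φ x a
    have ψx : ψ x = a := Function.update_self ..
    have ψn : ∀ v, rank v < m → ψ v = φ v := fun v hv => Function.update_of_ne (hne v hv) ..
    have hPm : ∀ u ∈ P x, rank u < m := fun u hu => hx ▸ hPr x u hu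
    refine ⟨ψ, ?_, ?_, ?_⟩
    · intro v hv
      rcases hsplit v hv with rfl | h
      · rwa [ψx]
      · rw [ψn v h]; exact h1 v h
    · intro v hv u hu
      rcases hsplit v hv with rfl | h
      · rw [ψx, ψn u (hPm u hu)]; exact ha1 u hu
      · rw [ψn v h, ψn u ((hPr v u hu).trans h)]; exact h2 v h u hu
    · rintro v hv ⟨u, hu, hvu⟩
      rcases hsplit v hv with rfl | h
      · have hb : ∀ y, rank y < m + 1 → G.Adj v y → y ∈ P v := by
          intro y hy hvy
          rcases hsplit y hy with rfl | h'
          · exact absurd hvy (G.loopless.irrefl _)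
          · exact hG y v hvy.symm (by omega)
        refine ⟨ψ u, u, hu, hvu, rfl, ?_⟩
        intro y hy hvy hyu
        have huP := hb u hu hvu
        have hyP := hb y hy hvy
        have hum := hPm u huP
        have hym := hPm y hyP
        rw [ψn u hum, ψn y hym] at hyu
        rcases lt_trichotomy (rank y) (rank u) with hl | hl | hl
        · exact absurd hyu (h2 u hum y (hP v y hyP u huP hl))
        · exact hinj hl
        · exact absurd hyu.symm (h2 y hym u (hP v u huP y hyP hl))
      · by_cases hn : ∃ u, rank u < m ∧ G.Adj v u
        · obtain ⟨z, hz, hvz, hzc, huniq⟩ := hc v h hn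
          refine ⟨c v, z, by omega, hvz, by rw [ψn z hz, hzc], ?_⟩
          intro y hy hvy hyc
          rcases hsplit y hy with rfl | h'
          · rw [ψx] at hyc
            exact absurd hyc.symm (ha2 v (hG v y hvy (by omega)))
          · rw [ψn y h'] at hyc
            exact huniq y h' hvy hyc
        · have : ∀ y, rank y < m + 1 → G.Adj v y → y = x := by
            intro y hy hvy
            rcases hsplit y hy with rfl | h'
            · rfl
            · exact absurd ⟨y, h', hvy⟩ hn
          have hux := this u hu hvu
          subst hux
          exact ⟨a, u, hu, hvu, ψx, fun y hy hvy _ => this y hy hvy⟩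

theorem stmt19 (w : ℕ) (V : Type) [Fintype V] (G : SimpleGraph V)
    (htw : ∃ (ι : Type) (_ : Fintype ι) (T : SimpleGraph ι) (B : ι → Set V),
      IsTreeDecomp G T B ∧ ∀ x : ι, (B x).ncard ≤ w + 1) :
    CFChoosable G ((2 * w + 1 : ℕ) : ℝ) := by
  classical
  obtain ⟨ι, _, T, B, hTD, hw⟩ := htw
  intro L hL
  have hL' : ∀ v, 2 * w + 1 ≤ (L v).card := fun v => by exact_mod_cast hL v
  obtain ⟨r⟩ := hTD.tree.1.nonempty
  have htop : ∀ v : V, ∃ t, v ∈ B t ∧ ∀ y, v ∈ B y → T.dist t r ≤ T.dist y r := by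
    intro v
    obtain ⟨⟨x, hx⟩⟩ := (hTD.bags_connected v).nonempty
    obtain ⟨t, ht, hmin⟩ := Set.exists_min_image {y | v ∈ B y} (fun y => T.dist y r)
      (Set.toFinite _) ⟨x, hx⟩
    exact ⟨t, ht, hmin⟩
  choose t ht hmin using htop
  have claim : ∀ u v x, u ∈ B x → v ∈ B x → T.dist (t u) r ≤ T.dist (t v) r → u ∈ B (t v) := by
    intro u v x hu hv hd
    obtain ⟨p, hp, _⟩ := hTD.tree.1.exists_path_of_dist x r
    have a1 := tree_top hTD.tree r x (t u) _ (hTD.bags_connected u) hu (ht u) (hmin u) p hp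
    have a2 := tree_top hTD.tree r x (t v) _ (hTD.bags_connected v) hv (ht v) (hmin v) p hp
    exact a1.2 _ a2.1 hd
  let e := Fintype.equivFin V
  let n := Fintype.card V
  let rank : V → ℕ := fun v => T.dist (t v) r * n + (e v : ℕ)
  have hr : ∀ u v, rank u ≤ rank v → T.dist (t u) r ≤ T.dist (t v) r := by
    intro u v h
    by_contra hlt
    push Not at hlt
    have h1 : (T.dist (t v) r + 1) * n ≤ T.dist (t u) r * n := Nat.mul_le_mul_right n hlt
    have h2 : (e v : ℕ) < n := (e v).2
    simp only [rank] at h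
    rw [Nat.add_mul] at h1
    omega
  have hinj : Function.Injective rank := by
    intro u v h
    have h1 := le_antisymm (hr u v h.le) (hr v u h.ge)
    simp only [rank, h1] at h
    exact e.injective (Fin.ext (by omega))
  let P : V → Finset V := fun v => Finset.univ.filter fun u => u ∈ B (t v) ∧ rank u < rank v
  have hPm : ∀ v u, u ∈ P v ↔ u ∈ B (t v) ∧ rank u < rank v := by simp [P]
  have hPc : ∀ v, (P v).card ≤ w := by
    intro v
    have hv : v ∉ P v := by simp [hPm]
    have h1 : (↑(insert v (P v)) : Set V) ⊆ B (t v) := by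
      intro y hy
      rw [Finset.mem_coe, Finset.mem_insert] at hy
      rcases hy with rfl | hy
      · exact ht y
      · exact ((hPm _ _).1 hy).1
    have h2 := Set.ncard_le_ncard h1 (Set.toFinite _)
    rw [Set.ncard_coe_finset, Finset.card_insert_of_notMem hv] at h2
    have := hw (t v)
    omega
  obtain ⟨M, hM⟩ : ∃ M, ∀ v, rank v < M :=
    ⟨Finset.univ.sup rank + 1, fun v => Nat.lt_succ_of_le (Finset.le_sup (Finset.mem_univ v))⟩
  have hG : ∀ u v, G.Adj u v → rank u < rank v → u ∈ P v := by
    intro u v huv hlt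
    obtain ⟨x, hu, hv⟩ := hTD.edge_in_bag huv
    exact (hPm _ _).2 ⟨claim u v x hu hv (hr _ _ hlt.le), hlt⟩
  obtain ⟨φ, h1, h2, h3⟩ := greedy w G rank hinj P hPc (fun v u hu => ((hPm _ _).1 hu).2) hG
    (fun v a ha b hb hab => (hPm _ _).2
      ⟨claim a b (t v) ((hPm _ _).1 ha).1 ((hPm _ _).1 hb).1 (hr _ _ hab.le), hab⟩) L hL' M
  refine ⟨φ, fun v => h1 v (hM v), ?_, ?_⟩
  · intro u v huv
    rcases lt_trichotomy (rank u) (rank v) with h | h | h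
    · exact h2 v (hM v) u (hG u v huv h)
    · exact absurd (hinj h) huv.ne
    · exact (h2 u (hM u) v (hG v u huv.symm h)).symm
  · rintro v ⟨u, hu⟩
    obtain ⟨c, z, _, hvz, hz, huniq⟩ := h3 v (hM v) ⟨u, hM u, hu⟩
    refine ⟨c, Set.ncard_eq_one.2 ⟨z, ?_⟩⟩
    ext y
    simp only [Set.mem_setOf_eq, Set.mem_singleton_iff]
    constructor
    · rintro ⟨h, h'⟩; exact huniq y (hM y) h h'
    · rintro rfl; exact ⟨hvz, hz⟩


end CFPaper
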